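/- arXiv:1409.3159 — 2 statements merged into one kernel-verified Lean document; each statement's English description precedes it below -/
import Mathlib

section
/- Let G be a connected graph and k a positive integer. Then G has a spanning k-ended tree if and only if t_k = t_{k+1}. (Proposition 1) -/
open SimpleGraph

variable {V : Type*}

/-- A set of vertices is independent in `G`. -/
def IsIndSet (G : SimpleGraph V) (s : Set V) : Prop :=
  ∀ ⦃u⦄, u ∈ s → ∀ ⦃v⦄, v ∈ s → ¬ G.Adj u v

/-- The number of end-vertices (vertices of degree one) of a subgraph `H`. -/
noncomputable def endVertexCount {G : SimpleGraph V} (H : G.Subgraph) : ℕ :=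
  {v : V | v ∈ H.verts ∧ (H.neighborSet v).ncard = 1}.ncard

/-- `H` is a cycle; a single vertex and a single edge are regarded as
simple cycles of orders 1 and 2, respectively. -/
def IsCycleSubgraph {G : SimpleGraph V} (H : G.Subgraph) : Prop :=
  H.Connected ∧ (H.verts.ncard ≤ 2 ∨ ∀ v ∈ H.verts, (H.neighborSet v).ncard = 2)

/-- `H` is a `k`-ended tree in `G`: a tree with at most `k` end-vertices (leaves);
a cycle is regarded as a 1-ended tree. -/
def IsKEndedTree (G : SimpleGraph V) (k : ℕ) (H : G.Subgraph) : Prop :=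
  (H.coe.IsTree ∧ endVertexCount H ≤ k) ∨ (1 ≤ k ∧ IsCycleSubgraph H)

/-- `t k`: the order of a largest `k`-ended tree in `G`. -/
noncomputable def maxKEndedOrder (G : SimpleGraph V) (k : ℕ) : ℕ :=
  sSup {n | ∃ H : G.Subgraph, IsKEndedTree G k H ∧ H.verts.ncard = n}

/-- `σ m`: the minimum degree sum over independent sets of `m` vertices of `G`,
and `+∞` if the independence number of `G` is less than `m`. -/
noncomputable def minDegreeSum (G : SimpleGraph V) [Fintype V] [DecidableRel G.Adj]
    (m : ℕ) : ℕ∞ :=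
  ⨅ s ∈ {s : Finset V | s.card = m ∧ IsIndSet G ↑s}, (∑ v ∈ s, G.degree v : ℕ∞)

/-- The vertices of degree one of a subgraph. -/
def endVertices {G : SimpleGraph V} (H : G.Subgraph) : Set V :=
  {v : V | v ∈ H.verts ∧ (H.neighborSet v).ncard = 1}

theorem isTree_coe_iff_connected_and_ncard [Finite V] {G : SimpleGraph V} (H : G.Subgraph) :
    H.coe.IsTree ↔ H.Connected ∧ H.edgeSet.ncard + 1 = H.verts.ncard := by
  rw [isTree_iff_connected_and_card, Subgraph.connected_iff', ← H.image_coe_edgeSet_coe,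
    Set.ncard_image_of_injective _ (Sym2.map.injective Subtype.val_injective)]
  rfl

theorem ncard_verts_sup_subgraphOfAdj [Finite V] {G : SimpleGraph V} (T : G.Subgraph) {x y : V}
    (hx : x ∈ T.verts) (hy : y ∉ T.verts) (hxy : G.Adj x y) :
    (T ⊔ G.subgraphOfAdj hxy).verts.ncard = T.verts.ncard + 1 := by
  have h : (T ⊔ G.subgraphOfAdj hxy).verts = insert y T.verts := by
    ext v
    simp only [Subgraph.verts_sup, subgraphOfAdj_verts, Set.mem_union, Set.mem_insert_iff,
      Set.mem_singleton_iff]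
    grind
  rw [h, Set.ncard_insert_of_notMem hy]

/-- Attaching a pendant edge to a tree gives a tree. -/
theorem isTree_sup_subgraphOfAdj [Finite V] {G : SimpleGraph V} {T : G.Subgraph}
    (hT : T.coe.IsTree) {x y : V} (hx : x ∈ T.verts) (hy : y ∉ T.verts) (hxy : G.Adj x y) :
    (T ⊔ G.subgraphOfAdj hxy).coe.IsTree := by
  rw [isTree_coe_iff_connected_and_ncard] at hT ⊢
  refine ⟨Subgraph.connected_sup hT.1.preconnected
    (Subgraph.subgraphOfAdj_connected hxy).preconnected ⟨x, hx, by simp⟩, ?_⟩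
  rw [ncard_verts_sup_subgraphOfAdj T hx hy hxy, ← hT.2, Subgraph.edgeSet_sup,
    edgeSet_subgraphOfAdj, Set.union_singleton, Set.ncard_insert_of_notMem]
  exact fun h => hy (Subgraph.edge_vert _ (Subgraph.mem_edgeSet.1 h).symm)

/-- Attaching a pendant edge at `x` creates one new end-vertex, and `x` stops being one,
unless it was isolated. -/
theorem endVertexCount_sup_subgraphOfAdj_le [Finite V] {G : SimpleGraph V} {T : G.Subgraph}
    (hT : T.Connected) {x y : V} (hx : x ∈ T.verts) (hy : y ∉ T.verts) (hxy : G.Adj x y) :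
    endVertexCount (T ⊔ G.subgraphOfAdj hxy) ≤ max 2 ((endVertices T \ {x}).ncard + 1) := by
  rcases Set.subsingleton_or_nontrivial T.verts with hs | hn
  · refine le_max_of_le_left ((Set.ncard_le_ncard (t := {x, y}) ?_).trans
      ((Set.ncard_insert_le x {y}).trans (by simp)))
    rintro v ⟨hv | hv, -⟩
    · exact Or.inl (hs hv hx)
    · simpa using hv
  · have : Nontrivial T.verts := hn.coe_sort
    obtain ⟨z, hz⟩ := hT.preconnected.exists_adj_of_nontrivial ⟨x, hx⟩
    have hzy : z ≠ y := by rintro rfl; exact hy hz.snd_mem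
    refine le_max_of_le_right
      ((Set.ncard_le_ncard (t := insert y (endVertices T \ {x})) ?_).trans (Set.ncard_insert_le _ _))
    rintro v ⟨hv, hd⟩
    by_cases hvy : v = y
    · exact Or.inl hvy
    have hvx : v ≠ x := by
      rintro rfl
      obtain ⟨w, hw⟩ := Set.ncard_eq_one.1 hd
      have h₁ : z ∈ (T ⊔ G.subgraphOfAdj hxy).neighborSet v := Or.inl hz
      have h₂ : y ∈ (T ⊔ G.subgraphOfAdj hxy).neighborSet v := Or.inr (by simp)
      rw [hw] at h₁ h₂
      exact hzy (h₁.trans h₂.symm)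
    have hvT : v ∈ T.verts := by
      rcases hv with hv | hv
      · exact hv
      · rcases hv with hv | hv
        exacts [(hvx hv).elim, (hvy hv).elim]
    refine Or.inr ⟨⟨hvT, ?_⟩, hvx⟩
    rwa [Subgraph.neighborSet_sup, neighborSet_subgraphOfAdj_of_ne_of_ne hxy hvx hvy,
      Set.union_empty] at hd

theorem ncard_edgeSet_eq_ncard_verts_of_two_regular [Finite V] {G : SimpleGraph V} {H : G.Subgraph}
    (h2 : ∀ v ∈ H.verts, (H.neighborSet v).ncard = 2) : H.edgeSet.ncard = H.verts.ncard := by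
  classical
  have := Fintype.ofFinite V
  have hsum := H.coe.sum_degrees_eq_twice_card_edges
  have hdeg (v : H.verts) [Fintype (H.coe.neighborSet v)] : H.coe.degree v = 2 := by
    rw [Subgraph.coe_degree, ← h2 v v.2, Subgraph.degree, ← Nat.card_eq_fintype_card]
    rfl
  simp only [hdeg, Finset.sum_const, Finset.card_univ, smul_eq_mul] at hsum
  rw [← H.image_coe_edgeSet_coe,
    Set.ncard_image_of_injective _ (Sym2.map.injective Subtype.val_injective),
    ← coe_edgeFinset, Set.ncard_coe_finset, ← Nat.card_coe_set_eq, Nat.card_eq_fintype_card]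
  omega

/-- Deleting an edge of a cycle leaves a tree. -/
theorem isTree_deleteEdges_of_two_regular [Finite V] {G : SimpleGraph V} {H : G.Subgraph}
    (hH : H.Connected) (h2 : ∀ v ∈ H.verts, (H.neighborSet v).ncard = 2) {x z : V}
    (hxz : H.Adj x z) : (H.deleteEdges {s(x, z)}).coe.IsTree := by
  rw [isTree_coe_iff_connected_and_ncard]
  constructor
  · have hcyc : H.coe.IsCycles := fun v _ => by
      rw [← h2 v v.2]
      exact Nat.card_congr (Subgraph.coeNeighborSetEquiv v)
    have hadj : H.coe.Adj ⟨x, hxz.fst_mem⟩ ⟨z, hxz.snd_mem⟩ := hxz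
    have hcon : (H.coe.deleteEdges {s(⟨x, hxz.fst_mem⟩, ⟨z, hxz.snd_mem⟩)}).Connected :=
      hH.coe.connected_delete_edge_of_not_isBridge
        (not_not.2 (hcyc.reachable_deleteEdges hadj))
    rw [Subgraph.deleteEdges_coe_eq, Set.image_singleton] at hcon
    exact ⟨hcon⟩
  · have he : (H.deleteEdges {s(x, z)}).edgeSet = H.edgeSet \ {s(x, z)} := by
      ext e
      induction e
      simp
    rw [he, Set.ncard_sdiff_singleton_add_one (Subgraph.mem_edgeSet.2 hxz),
      ncard_edgeSet_eq_ncard_verts_of_two_regular h2, Subgraph.deleteEdges_verts]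

theorem endVertices_deleteEdges_subset {G : SimpleGraph V} {H : G.Subgraph}
    (h2 : ∀ v ∈ H.verts, (H.neighborSet v).ncard = 2) (x z : V) :
    endVertices (H.deleteEdges {s(x, z)}) ⊆ {x, z} := by
  rintro v ⟨hv, hd⟩
  by_contra hne
  simp only [Set.mem_insert_iff, Set.mem_singleton_iff, not_or] at hne
  have : (H.deleteEdges {s(x, z)}).neighborSet v = H.neighborSet v := by
    ext w
    simp [hne.1, hne.2]
  rw [this, h2 v hv] at hd
  omega

/-- A non-spanning `k`-ended tree has a neighbouring vertex that can be absorbed at the cost of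
at most one more end-vertex. -/
theorem exists_isKEndedTree_succ_of_adj [Finite V] {G : SimpleGraph V} {k : ℕ} (hk : 1 ≤ k)
    {H : G.Subgraph} (hH : IsKEndedTree G k H) {x y : V} (hx : x ∈ H.verts) (hy : y ∉ H.verts)
    (hxy : G.Adj x y) :
    ∃ H' : G.Subgraph, IsKEndedTree G (k + 1) H' ∧ H'.verts.ncard = H.verts.ncard + 1 := by
  have key : ∀ T : G.Subgraph, T.coe.IsTree → T.verts = H.verts →
      (endVertices T \ {x}).ncard ≤ k →
      ∃ H' : G.Subgraph, IsKEndedTree G (k + 1) H' ∧ H'.verts.ncard = H.verts.ncard + 1 := by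
    intro T hT hv hk'
    rw [← hv] at hx hy ⊢
    refine ⟨T ⊔ G.subgraphOfAdj hxy, Or.inl ⟨isTree_sup_subgraphOfAdj hT hx hy hxy, ?_⟩,
      ncard_verts_sup_subgraphOfAdj T hx hy hxy⟩
    have := endVertexCount_sup_subgraphOfAdj_le ⟨hT.connected⟩ hx hy hxy
    omega
  rcases hH with ⟨hT, hle⟩ | ⟨-, hcon, hsmall | h2⟩
  · exact key H hT rfl ((Set.ncard_le_ncard Set.sdiff_subset).trans hle)
  · refine key H ⟨hcon.coe, .of_card_le_two ?_⟩ rfl ?_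
    · rw [ENat.card_eq_coe_natCard]
      exact_mod_cast hsmall
    · have h₁ : (endVertices H \ {x}).ncard ≤ (H.verts \ {x}).ncard :=
        Set.ncard_le_ncard (Set.sdiff_subset_sdiff_left fun v hv => hv.1)
      have h₂ := Set.ncard_sdiff_singleton_add_one hx
      omega
  · obtain ⟨z, hz⟩ := Set.nonempty_of_ncard_ne_zero (s := H.neighborSet x) (by simp [h2 x hx])
    refine key _ (isTree_deleteEdges_of_two_regular hcon h2 hz) rfl (le_trans ?_ hk)
    rw [← Set.ncard_singleton z]
    refine Set.ncard_le_ncard ?_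
    rintro v ⟨hv, hvx⟩
    exact (endVertices_deleteEdges_subset h2 x z hv).resolve_left hvx

theorem le_maxKEndedOrder [Finite V] {G : SimpleGraph V} {k : ℕ} {H : G.Subgraph}
    (hH : IsKEndedTree G k H) : H.verts.ncard ≤ maxKEndedOrder G k := by
  refine le_csSup ⟨Nat.card V, ?_⟩ ⟨H, hH, rfl⟩
  rintro n ⟨K, -, rfl⟩
  exact Set.ncard_le_card _

theorem exists_ncard_verts_eq_maxKEndedOrder [Finite V] [Nonempty V] (G : SimpleGraph V) {k : ℕ}
    (hk : 1 ≤ k) : ∃ H : G.Subgraph, IsKEndedTree G k H ∧ H.verts.ncard = maxKEndedOrder G k := by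
  obtain ⟨v⟩ := ‹Nonempty V›
  refine Nat.sSup_mem (s := {n | ∃ H : G.Subgraph, IsKEndedTree G k H ∧ H.verts.ncard = n})
    ⟨_, G.singletonSubgraph v, Or.inr ⟨hk, Subgraph.singletonSubgraph_connected, by simp⟩, rfl⟩
    ⟨Nat.card V, ?_⟩
  rintro n ⟨K, -, rfl⟩
  exact Set.ncard_le_card _

/-- **Proposition 1.** A connected graph `G` has a spanning `k`-ended tree
if and only if `t_k = t_{k+1}`. -/
theorem proposition1 [Fintype V] (G : SimpleGraph V) (hG : G.Connected)
    (k : ℕ) (hk : 1 ≤ k) :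
    (∃ H : G.Subgraph, H.IsSpanning ∧ IsKEndedTree G k H) ↔
      maxKEndedOrder G k = maxKEndedOrder G (k + 1) := by
  have := hG.nonempty
  constructor
  · rintro ⟨H, hs, hH⟩
    have hcard : H.verts.ncard = Nat.card V := by
      rw [Subgraph.isSpanning_iff.1 hs, Set.ncard_univ]
    have h₁ := le_maxKEndedOrder hH
    have h₂ : H.verts.ncard ≤ maxKEndedOrder G (k + 1) :=
      le_maxKEndedOrder (hH.imp (fun h => ⟨h.1, by omega⟩) fun h => ⟨by omega, h.2⟩)
    obtain ⟨K, -, hK⟩ := exists_ncard_verts_eq_maxKEndedOrder G hk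
    obtain ⟨L, -, hL⟩ := exists_ncard_verts_eq_maxKEndedOrder G (k := k + 1) (by omega)
    have hK' := Set.ncard_le_card K.verts
    have hL' := Set.ncard_le_card L.verts
    omega
  · intro h
    obtain ⟨H, hH, hcard⟩ := exists_ncard_verts_eq_maxKEndedOrder G hk
    refine ⟨H, ?_, hH⟩
    by_contra hs
    obtain ⟨w, hw⟩ := not_forall.1 hs
    obtain ⟨u, hu⟩ : H.verts.Nonempty := by
      rcases hH with hT | hC
      · exact Set.nonempty_coe_sort.1 hT.1.connected.nonempty
      · exact hC.2.1.nonempty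
    obtain ⟨p⟩ := hG.preconnected u w
    obtain ⟨d, -, hx, hy⟩ := p.exists_boundary_dart H.verts hu hw
    obtain ⟨H', hH', hcard'⟩ := exists_isKEndedTree_succ_of_adj hk hH hx hy d.adj
    have := le_maxKEndedOrder hH'
    omega
end

section
/- Let G be a connected graph of order n and let k and λ be positive integers with k ≥ 2. If λ ≥ n/(k+1), then t_k ≥ t_{k+1} − λ + 1. (Corollary 1) -/
open SimpleGraph

variable {V : Type*}

namespace SimpleGraph

open Finset

section Counting

variable {W : Type*} [Fintype W] {T : SimpleGraph W}

lemma IsAcyclic.isTree_of_card_le [Nonempty W] (hT : T.IsAcyclic)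
    (h : Fintype.card W ≤ Nat.card T.edgeSet + 1) : T.IsTree := by
  obtain ⟨T', hle, -, hT'⟩ :=
    (connected_top (V := W)).exists_isTree_le_of_le_of_isAcyclic le_top hT
  have hc := (isTree_iff_connected_and_card.1 hT').2
  rw [Nat.card_eq_fintype_card (α := W), Nat.card_coe_set_eq] at hc
  rw [Nat.card_coe_set_eq] at h
  have : T.edgeSet = T'.edgeSet :=
    Set.eq_of_subset_of_ncard_le (edgeSet_mono hle) (by lia) (Set.toFinite _)
  rwa [edgeSet_inj.1 this]

lemma IsTree.sum_degree_add_two [DecidableRel T.Adj] (hT : T.IsTree) :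
    ∑ x, T.degree x + 2 = 2 * Fintype.card W := by
  rw [sum_degrees_eq_twice_card_edges, ← hT.card_edgeFinset]
  lia

variable [DecidableRel T.Adj]

lemma sum_degree_add_card_leaves_le {C : Finset W} (hdeg : ∀ x ∈ C, T.degree x ≤ 2) :
    ∑ x ∈ C, T.degree x + #{x ∈ C | T.degree x = 1} ≤ 2 * #C := by
  rw [Finset.card_filter, ← Finset.sum_add_distrib, mul_comm, ← smul_eq_mul]
  refine Finset.sum_le_card_nsmul _ _ _ fun x hx => ?_
  have := hdeg x hx
  split_ifs <;> lia

lemma IsTree.exists_two_lt_degree (hT : T.IsTree) (hL : 3 ≤ #{x | T.degree x = 1}) :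
    ∃ x, 2 < T.degree x := by
  by_contra! hdeg
  have h₁ := sum_degree_add_card_leaves_le (T := T) (C := univ) fun x _ => hdeg x
  have h₂ := hT.sum_degree_add_two
  rw [Finset.card_univ] at h₁
  lia

variable [DecidableEq W]

/-- The degree sum inside a vertex set `S` is twice the number of edges spanned by `S`. -/
lemma sum_card_neighborFinset_inter (T : SimpleGraph W) [DecidableRel T.Adj] (S : Finset W) :
    ∑ x ∈ S, #(T.neighborFinset x ∩ S) = 2 * Nat.card (T.induce (S : Set W)).edgeSet := by
  have h := (T.induce (S : Set W)).sum_degrees_eq_twice_card_edges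
  rw [Nat.card_eq_fintype_card, ← edgeFinset_card, ← h, ← Finset.sum_coe_sort S]
  refine Finset.sum_congr rfl fun x _ => ?_
  rw [← card_neighborFinset_eq_degree,
    ← Finset.card_map (Function.Embedding.subtype fun y => y ∈ (S : Set W))]
  congr 1
  ext y
  simp [and_comm]

lemma card_neighborFinset_inter_add (T : SimpleGraph W) [DecidableRel T.Adj] (S : Finset W)
    (x : W) : #(T.neighborFinset x ∩ S) + #(T.neighborFinset x ∩ Sᶜ) = T.degree x := by
  rw [← card_neighborFinset_eq_degree, ← Finset.sdiff_eq_inter_compl,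
    Finset.card_inter_add_card_sdiff]

/-- Counting the edges between two vertex sets from either side. -/
lemma sum_card_neighborFinset_inter_comm (T : SimpleGraph W) [DecidableRel T.Adj]
    (S C : Finset W) :
    ∑ x ∈ S, #(T.neighborFinset x ∩ C) = ∑ x ∈ C, #(T.neighborFinset x ∩ S) := by
  have h := Finset.sum_card_bipartiteAbove_eq_sum_card_bipartiteBelow (s := S) (t := C) T.Adj
  convert h using 3 with x _ x _
  · ext y; simp [bipartiteAbove, and_comm]
  · ext y; simp [bipartiteBelow, and_comm, T.adj_comm]

lemma two_mul_card_le_of_induce_connected {C : Finset W} (hC : (T.induce (C : Set W)).Connected) :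
    2 * #C ≤ ∑ x ∈ C, #(T.neighborFinset x ∩ C) + 2 := by
  have h := hC.card_vert_le_card_edgeSet_add_one
  rw [Nat.card_coe_set_eq, Set.ncard_coe_finset] at h
  rw [sum_card_neighborFinset_inter]
  lia

lemma sum_card_neighborFinset_compl_add_card_leaves_le {C : Finset W}
    (hC : (T.induce (C : Set W)).Connected) (hdeg : ∀ x ∈ C, T.degree x ≤ 2) :
    ∑ x ∈ C, #(T.neighborFinset x ∩ Cᶜ) + #{x ∈ C | T.degree x = 1} ≤ 2 := by
  have h₁ := two_mul_card_le_of_induce_connected hC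
  have h₂ := sum_degree_add_card_leaves_le hdeg
  simp_rw [← T.card_neighborFinset_inter_add C, Finset.sum_add_distrib] at h₂
  simp_rw [T.card_neighborFinset_inter_add C] at h₂
  lia

/-- In a tree with at least three leaves, a connected set of vertices of degree at most two
contains at most one leaf. -/
lemma IsTree.eq_of_mem_of_degree_eq_one (hT : T.IsTree)
    (hL : 3 ≤ #{x | T.degree x = 1}) {C : Finset W}
    (hC : (T.induce (C : Set W)).Connected) (hdeg : ∀ x ∈ C, T.degree x ≤ 2)
    {v w : W} (hv : v ∈ C) (hw : w ∈ C) (hdv : T.degree v = 1) (hdw : T.degree w = 1) :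
    v = w := by
  by_contra hne
  have h₁ := sum_card_neighborFinset_compl_add_card_leaves_le hC hdeg
  have h₂ : 2 ≤ #{x ∈ C | T.degree x = 1} := by
    rw [← Finset.card_pair hne]
    exact Finset.card_le_card (by grind)
  have h₃ : ∑ x ∈ C, #(T.neighborFinset x ∩ Cᶜ) = 0 := by lia
  obtain ⟨b, hb⟩ := hT.exists_two_lt_degree hL
  have hbC : b ∉ C := fun h => by have := hdeg b h; lia
  obtain ⟨p⟩ := hT.connected.preconnected v b
  obtain ⟨d, -, hd₁, hd₂⟩ := p.exists_boundary_dart (C : Set W) hv hbC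
  have h₄ := Finset.sum_eq_zero_iff.1 h₃ d.fst hd₁
  rw [Finset.card_eq_zero] at h₄
  have : d.snd ∈ T.neighborFinset d.fst ∩ Cᶜ := by
    simp [d.adj, Finset.mem_coe.not.1 hd₂]
  simp [h₄] at this

/-- Every leaf `v` lies in a maximal connected set of vertices of degree at most two. -/
lemma exists_maximal_pendant (T : SimpleGraph W) [DecidableRel T.Adj] {v : W}
    (hv : T.degree v = 1) :
    ∃ C : Finset W, v ∈ C ∧ (T.induce (C : Set W)).Connected ∧ (∀ x ∈ C, T.degree x ≤ 2) ∧
      ∀ x ∈ C, ∀ y ∉ C, T.Adj x y → 2 < T.degree y := by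
  classical
  let P : Finset (Finset W) :=
    {C | v ∈ C ∧ (T.induce (C : Set W)).Connected ∧ ∀ x ∈ C, T.degree x ≤ 2}
  have hP : {v} ∈ P := by
    have : (T.induce ({v} : Set W)).Connected := by
      rw [induce_singleton_eq_top]
      exact connected_top
    rw [← Finset.coe_singleton] at this
    exact (Finset.mem_filter_univ _).2 ⟨by simp, this, by simp [hv]⟩
  obtain ⟨C, hCP, hmax⟩ := P.exists_max_image card ⟨_, hP⟩
  obtain ⟨hvC, hC, hdeg⟩ := (Finset.mem_filter_univ C).1 hCP
  refine ⟨C, hvC, hC, hdeg, fun x hx y hy hxy => ?_⟩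
  by_contra! hle
  have hmem : C ∪ {x, y} ∈ P := by
    refine (Finset.mem_filter_univ _).2 ⟨by simp [hvC], ?_, by grind⟩
    have := induce_union_connected hC.preconnected
      (induce_pair_connected_of_adj hxy).preconnected ⟨x, hx, by simp⟩
    rwa [← Finset.coe_pair, ← Finset.coe_union] at this
  have hlt : #C < #(C ∪ {x, y}) :=
    Finset.card_lt_card ⟨Finset.subset_union_left, fun h => hy (h (by simp))⟩
  exact absurd (hmax _ hmem) (by lia)

/-- Deleting a maximal pendant path from a tree leaves a tree without new leaves. -/
lemma IsTree.induce_compl_pendant (hT : T.IsTree) (hL : 3 ≤ #{x | T.degree x = 1})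
    {C : Finset W} {v : W} (hv : T.degree v = 1) (hvC : v ∈ C)
    (hC : (T.induce (C : Set W)).Connected) (hdeg : ∀ x ∈ C, T.degree x ≤ 2)
    (hmax : ∀ x ∈ C, ∀ y ∉ C, T.Adj x y → 2 < T.degree y) :
    (T.induce (Cᶜ : Finset W)).IsTree ∧
      #{x ∈ Cᶜ | #(T.neighborFinset x ∩ Cᶜ) = 1} < #{x | T.degree x = 1} := by
  have hleaf : 1 ≤ #{x ∈ C | T.degree x = 1} := Finset.card_pos.2 ⟨v, by simp [hvC, hv]⟩
  have hout : ∑ x ∈ C, #(T.neighborFinset x ∩ Cᶜ) ≤ 1 := by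
    have := sum_card_neighborFinset_compl_add_card_leaves_le hC hdeg
    lia
  have hin : ∑ x ∈ Cᶜ, #(T.neighborFinset x ∩ C) ≤ 1 := by
    rwa [sum_card_neighborFinset_inter_comm]
  constructor
  · obtain ⟨b, hb⟩ := hT.exists_two_lt_degree hL
    have hbC : b ∈ Cᶜ := by
      rw [Finset.mem_compl]
      exact fun h => by have := hdeg b h; lia
    have : Nonempty ((Cᶜ : Finset W) : Set W) := ⟨⟨b, hbC⟩⟩
    refine (hT.isAcyclic.induce _).isTree_of_card_le ?_
    have h₁ := sum_degree_add_card_leaves_le hdeg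
    have h₂ := hT.sum_degree_add_two
    have h₃ : ∑ x ∈ Cᶜ, T.degree x =
        ∑ x ∈ Cᶜ, #(T.neighborFinset x ∩ C) + ∑ x ∈ Cᶜ, #(T.neighborFinset x ∩ Cᶜ) := by
      simp_rw [← Finset.sum_add_distrib, T.card_neighborFinset_inter_add C]
    rw [T.sum_card_neighborFinset_inter Cᶜ] at h₃
    rw [← Finset.sum_add_sum_compl C] at h₂
    have h₄ := C.card_add_card_compl
    rw [← Nat.card_eq_fintype_card, Nat.card_coe_set_eq, Set.ncard_coe_finset]
    lia
  · refine Finset.card_lt_card ⟨fun x hx => ?_, fun h => ?_⟩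
    · obtain ⟨hxC, hx₁⟩ := Finset.mem_filter.1 hx
      have h₁ := T.card_neighborFinset_inter_add C x
      have h₂ := (Finset.single_le_sum (f := fun x => #(T.neighborFinset x ∩ C))
        (fun _ _ => Nat.zero_le _) hxC).trans hin
      rcases (T.neighborFinset x ∩ C).eq_empty_or_nonempty with h₀ | ⟨y, hy⟩
      · rw [h₀, Finset.card_empty, zero_add] at h₁
        simp [← h₁, hx₁]
      · rw [Finset.mem_inter, mem_neighborFinset] at hy
        have := hmax y hy.2 x (by simpa using hxC) hy.1.symm
        lia
    · have := h ((Finset.mem_filter_univ v).2 hv)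
      simp [hvC] at this

/-- A tree with `m ≥ 3` leaves contains a subtree with fewer leaves that misses fewer than a
proportion `1 / m` of the vertices. -/
lemma IsTree.exists_induce_isTree_card_leaves_lt (hT : T.IsTree)
    (hL : 3 ≤ #{x | T.degree x = 1}) :
    ∃ C : Finset W, (T.induce (Cᶜ : Finset W)).IsTree ∧
      #{x ∈ Cᶜ | #(T.neighborFinset x ∩ Cᶜ) = 1} < #{x | T.degree x = 1} ∧
      #{x | T.degree x = 1} * #C < Fintype.card W := by
  choose! C hvC hC hdeg hmax using fun v => T.exists_maximal_pendant (v := v)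
  obtain ⟨v, hv, hmin⟩ := Finset.exists_min_image {x | T.degree x = 1} (fun v => #(C v))
    (Finset.card_pos.1 (by lia))
  simp only [Finset.mem_filter_univ] at hv hmin
  obtain ⟨h₁, h₂⟩ := hT.induce_compl_pendant hL hv (hvC v hv) (hC v hv) (hdeg v hv) (hmax v hv)
  refine ⟨C v, h₁, h₂, ?_⟩
  have hdisj : ((({x | T.degree x = 1} : Finset W)) : Set W).PairwiseDisjoint C := by
    intro a ha b hb hab
    rw [Finset.mem_coe, Finset.mem_filter_univ] at ha hb
    refine Finset.disjoint_left.2 fun x hxa hxb => hab ?_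
    have hconn := induce_union_connected (hC a ha).preconnected (hC b hb).preconnected
      ⟨x, hxa, hxb⟩
    rw [← Finset.coe_union] at hconn
    refine hT.eq_of_mem_of_degree_eq_one hL hconn (fun y hy => ?_)
      (Finset.mem_union_left _ (hvC a ha)) (Finset.mem_union_right _ (hvC b hb)) ha hb
    rcases Finset.mem_union.1 hy with hy | hy
    exacts [hdeg a ha y hy, hdeg b hb y hy]
  obtain ⟨b, hb⟩ := hT.exists_two_lt_degree hL
  calc #{x | T.degree x = 1} * #(C v)
      ≤ ∑ x with T.degree x = 1, #(C x) :=
        Finset.card_nsmul_le_sum _ _ _ fun x hx => hmin x (by simpa using hx)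
    _ = #(({x | T.degree x = 1} : Finset W).biUnion C) := (Finset.card_biUnion hdisj).symm
    _ < Fintype.card W := Finset.card_lt_univ_of_notMem (x := b) fun h => by
        obtain ⟨x, hx, hbx⟩ := Finset.mem_biUnion.1 h
        have := hdeg x (by simpa using hx) b hbx
        lia

end Counting

section MaxKEndedOrder

variable {G : SimpleGraph V}

lemma Subgraph.ncard_neighborSet_eq_degree (H : G.Subgraph) [Fintype H.verts]
    [DecidableRel H.coe.Adj] (x : H.verts) : (H.neighborSet x).ncard = H.coe.degree x := by
  rw [← card_neighborFinset_eq_degree, ← Set.ncard_coe_finset, coe_neighborFinset,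
    ← Set.ncard_image_of_injective _ Subtype.val_injective]
  congr 1
  ext y
  simpa using fun h : H.Adj x y => H.edge_vert h.symm

lemma endVertexCount_eq_card (H : G.Subgraph) [Fintype H.verts] [DecidableRel H.coe.Adj] :
    endVertexCount H = #{x | H.coe.degree x = 1} := by
  rw [← Set.ncard_coe_finset, ← Set.ncard_image_of_injective _ Subtype.val_injective,
    endVertexCount]
  congr 1
  ext y
  simp [← H.ncard_neighborSet_eq_degree, and_comm]

lemma endVertexCount_induce (H : G.Subgraph) [Fintype H.verts] [DecidableEq H.verts]
    [DecidableRel H.coe.Adj] (S : Finset H.verts) :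
    endVertexCount (H.induce (Subtype.val '' (S : Set H.verts))) =
      #{x ∈ S | #(H.coe.neighborFinset x ∩ S) = 1} := by
  have hnb (x : H.verts) (hx : x ∈ S) :
      ((H.induce (Subtype.val '' (S : Set H.verts))).neighborSet x).ncard =
        #(H.coe.neighborFinset x ∩ S) := by
    rw [← Set.ncard_coe_finset, ← Set.ncard_image_of_injective _ Subtype.val_injective]
    congr 1
    ext y
    simp [hx]
    grind
  rw [← Set.ncard_coe_finset, ← Set.ncard_image_of_injective _ Subtype.val_injective,
    endVertexCount]
  congr 1
  ext y
  constructor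
  · rintro ⟨⟨x, hx, rfl⟩, h⟩
    exact ⟨x, by simpa [← hnb x hx] using ⟨hx, Set.ncard_eq_one.1 h⟩, rfl⟩
  · rintro ⟨x, hx, rfl⟩
    obtain ⟨hxS, h⟩ := Finset.mem_filter.1 (Finset.mem_coe.1 hx)
    exact ⟨⟨x, hxS, rfl⟩, (hnb x hxS).trans h⟩

variable [Finite V]

lemma bddAbove_setOf_isKEndedTree (G : SimpleGraph V) (k : ℕ) :
    BddAbove {n | ∃ H : G.Subgraph, IsKEndedTree G k H ∧ H.verts.ncard = n} :=
  ⟨Nat.card V, by rintro _ ⟨H, -, rfl⟩; exact Set.ncard_le_card _⟩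

lemma _root_.IsKEndedTree.ncard_le_maxKEndedOrder {k : ℕ} {H : G.Subgraph}
    (hH : IsKEndedTree G k H) : H.verts.ncard ≤ maxKEndedOrder G k :=
  le_csSup (bddAbove_setOf_isKEndedTree G k) ⟨H, hH, rfl⟩

lemma exists_isKEndedTree_ncard_eq [Nonempty V] (G : SimpleGraph V) {k : ℕ} (hk : 1 ≤ k) :
    ∃ H : G.Subgraph, IsKEndedTree G k H ∧ H.verts.ncard = maxKEndedOrder G k := by
  refine Nat.sSup_mem ?_ (bddAbove_setOf_isKEndedTree G k)
  let v := Classical.arbitrary V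
  exact ⟨_, G.singletonSubgraph v,
    .inr ⟨hk, Subgraph.singletonSubgraph_connected, .inl (by simp)⟩, rfl⟩

/-- A tree with exactly `k + 1 ≥ 3` leaves contains a `k`-ended tree that misses fewer than a
proportion `1 / (k + 1)` of its vertices. -/
lemma exists_isKEndedTree_of_endVertexCount_eq {k : ℕ} (hk : 2 ≤ k) {H : G.Subgraph}
    (hH : H.coe.IsTree) (hcount : endVertexCount H = k + 1) :
    ∃ H' : G.Subgraph, IsKEndedTree G k H' ∧
      ∃ c, H'.verts.ncard + c = H.verts.ncard ∧ (k + 1) * c < H.verts.ncard := by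
  classical
  have := Fintype.ofFinite H.verts
  rw [endVertexCount_eq_card] at hcount
  obtain ⟨C, hC, hlt, hcard⟩ := hH.exists_induce_isTree_card_leaves_lt (by lia)
  rw [hcount] at hlt hcard
  have hW : H.verts.ncard = Fintype.card H.verts := by
    rw [← Nat.card_coe_set_eq, Nat.card_eq_fintype_card]
  refine ⟨H.induce (Subtype.val '' ((Cᶜ : Finset H.verts) : Set H.verts)), .inl ⟨?_, ?_⟩,
    #C, ?_, ?_⟩
  · rw [(H.coeInduceIso _ (by simp)).isTree_iff]
    convert hC using 2 <;> ext x <;> simp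
  · rw [endVertexCount_induce]
    lia
  · rw [Subgraph.induce_verts, Set.ncard_image_of_injective _ Subtype.val_injective,
      Set.ncard_coe_finset, hW, add_comm, C.card_add_card_compl]
  · rwa [hW]

end MaxKEndedOrder

end SimpleGraph

/-- **Corollary 1.** If `G` is connected of order `n`, `k ≥ 2`, `λ ≥ 1` and
`λ ≥ n/(k+1)`, then `t_k ≥ t_{k+1} - λ + 1`. -/
theorem corollary1 [Fintype V] (G : SimpleGraph V) (hG : G.Connected)
    (k l : ℕ) (hk : 2 ≤ k) (hl : 1 ≤ l)
    (h : (Fintype.card V : ℚ) / (k + 1) ≤ l) :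
    maxKEndedOrder G k + l ≥ maxKEndedOrder G (k + 1) + 1 := by
  have := hG.nonempty
  obtain ⟨H, hH, hmax⟩ := exists_isKEndedTree_ncard_eq G (k := k + 1) (by lia)
  rw [← hmax]
  by_cases hHk : IsKEndedTree G k H
  · have := hHk.ncard_le_maxKEndedOrder
    lia
  obtain ⟨hT, hcount⟩ | hcyc := hH
  · have hcount' : endVertexCount H = k + 1 :=
      le_antisymm hcount (Nat.lt_of_not_le fun hle => hHk (.inl ⟨hT, hle⟩))
    obtain ⟨H', hH', c, hc, hlt⟩ := exists_isKEndedTree_of_endVertexCount_eq hk hT hcount'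
    have hle := hH'.ncard_le_maxKEndedOrder
    have hcard : H.verts.ncard ≤ Fintype.card V :=
      (Set.ncard_le_card _).trans_eq Nat.card_eq_fintype_card
    have hn : Fintype.card V ≤ l * (k + 1) := by
      rw [div_le_iff₀ (by positivity)] at h
      exact_mod_cast h
    have hcl : c < l := by
      rw [mul_comm l] at hn
      exact Nat.lt_of_mul_lt_mul_left (hlt.trans_le (hcard.trans hn))
    lia
  · exact absurd (.inr ⟨by lia, hcyc.2⟩) hHk
end
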